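/- Let (d_n)_{n∈ℕ} be a sequence of integers with d_n ≥ 3 and (q_n)_{n∈ℕ} a sequence of prime powers, and suppose there does NOT exist an infinite subset I of ℕ and an integer d such that d_n = d for all n ∈ I and the q_n for n ∈ I are strictly increasing (i.e., q_n < q_m whenever n, m ∈ I and n < m). Then c(∏_{n∈ℕ} Sp(2d_n, GF(q_n))) > ω; that is, the full direct product of the symplectic groups Sp(2d_n, GF(q_n)) cannot be written as the union of a countable increasing chain of proper subgroups. -/

import Mathlib

namespace CofSp

open Classical in
/-- Restriction of an element of a direct product to a set of coordinates. -/
noncomputable def rho {ι : Type*} {K : ι → Type*} [∀ i, Group (K i)] (X : Set ι) :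
    (∀ i, K i) →* (∀ i, K i) where
  toFun g := fun i => if i ∈ X then g i else 1
  map_one' := by funext i; simp
  map_mul' a b := by funext i; by_cases h : i ∈ X <;> simp [h]

section abstract
variable {ι : Type*} {K : ι → Type*} [∀ i, Group (K i)]

lemma rho_mem {X : Set ι} {i : ι} (h : i ∈ X) (g : ∀ i, K i) : rho X g i = g i := by
  simp [rho, h]

lemma rho_not_mem {X : Set ι} {i : ι} (h : i ∉ X) (g : ∀ i, K i) : rho X g i = 1 := by
  simp [rho, h]

lemma rho_univ (g : ∀ i, K i) : rho Set.univ g = g := by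
  funext i; exact rho_mem (Set.mem_univ i) g

lemma rho_rho (X Y : Set ι) (g : ∀ i, K i) : rho X (rho Y g) = rho (X ∩ Y) g := by
  funext i
  by_cases h : i ∈ X <;> by_cases h' : i ∈ Y <;> simp [rho, h, h']

lemma rho_split (X Y : Set ι) (g : ∀ i, K i) :
    rho (X ∪ Y) g = rho X g * rho (Y \ X) g := by
  funext i
  by_cases h : i ∈ X <;> by_cases h' : i ∈ Y <;> simp [rho, h, h']

/-- A set of coordinates is good if the corresponding subproduct is inside one member of the
chain. -/
def Good (H : ℕ → Subgroup (∀ i, K i)) (X : Set ι) : Prop := ∃ t, ∀ g, rho X g ∈ H t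

variable {H : ℕ → Subgroup (∀ i, K i)}

lemma Good.mono {X Y : Set ι} (h : Good H Y) (hXY : X ⊆ Y) : Good H X := by
  obtain ⟨t, ht⟩ := h
  refine ⟨t, fun g => ?_⟩
  have := ht (rho X g)
  rwa [rho_rho, Set.inter_eq_right.2 hXY] at this

lemma Good.union (hm : Monotone H) {X Y : Set ι} (hX : Good H X) (hY : Good H Y) :
    Good H (X ∪ Y) := by
  obtain ⟨s, hs⟩ := hX
  obtain ⟨t, ht⟩ := hY.mono (X := Y \ X) Set.sdiff_subset
  refine ⟨max s t, fun g => ?_⟩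
  rw [rho_split]
  exact mul_mem (hm (le_max_left s t) (hs g)) (hm (le_max_right s t) (ht g))

lemma fact1 (hm : Monotone H) (hu : ∀ g, ∃ t, g ∈ H t) (z : ∀ i, K i)
    (hz : ∀ M : Subgroup (∀ i, K i), M.Normal → z ∈ M → M = ⊤)
    (X : ℕ → Set ι) (hX : Pairwise (Function.onFun Disjoint X)) : ∃ j, Good H (X j) := by
  classical
  by_contra hcon
  push Not at hcon
  choose s0 hs0 using fun j => hu (rho (X j) z)
  let s : ℕ → ℕ := fun j => max j (s0 j)
  have hs : ∀ j, rho (X j) z ∈ H (s j) := fun j => hm (le_max_right _ _) (hs0 j)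
  have key : ∀ j, ∃ a : ∀ i, K i, ∀ h ∈ H (s j), ∃ i ∈ X j, h i ≠ a i := by
    intro j
    by_contra hj
    push Not at hj
    apply hcon j
    let M : Subgroup (∀ i, K i) := (H (s j)).comap (rho (X j))
    have hM : M.Normal := by
      constructor
      intro n hn g
      obtain ⟨h, hh, hg⟩ := hj g
      have : rho (X j) (g * n * g⁻¹) = h * rho (X j) n * h⁻¹ := by
        funext i
        by_cases hi : i ∈ X j
        · simp [rho, hi, hg i hi]
        · simp [rho, hi]
      change rho (X j) (g * n * g⁻¹) ∈ H (s j)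
      rw [this]
      exact mul_mem (mul_mem hh hn) (inv_mem hh)
    have hT := hz M hM (hs j)
    refine ⟨s j, fun g => ?_⟩
    have : g ∈ M := by rw [hT]; trivial
    exact this
  choose a ha using key
  let b : ∀ i, K i := fun i => if h : ∃ j, i ∈ X j then a h.choose i else 1
  obtain ⟨t, ht⟩ := hu b
  obtain ⟨i, hi, hne⟩ := ha t b (hm (le_max_left _ _) ht)
  apply hne
  have hex : ∃ j, i ∈ X j := ⟨t, hi⟩
  have : hex.choose = t := by
    by_contra hne
    exact Set.disjoint_left.1 (hX hne) hex.choose_spec hi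
  simp only [b, dif_pos hex, this]

lemma exists_prime_set (hm : Monotone H) (hu : ∀ g, ∃ t, g ∈ H t) (z : ∀ i, K i)
    (hz : ∀ M : Subgroup (∀ i, K i), M.Normal → z ∈ M → M = ⊤)
    (A : Set ι) (hA : ¬ Good H A) :
    ∃ X ⊆ A, ¬ Good H X ∧ ∀ Y ⊆ X, Good H Y ∨ Good H (X \ Y) := by
  by_contra hcon
  push Not at hcon
  let P := {X : Set ι // X ⊆ A ∧ ¬ Good H X}
  have hstep : ∀ X : P, ∃ Y : P, Y.1 ⊆ X.1 ∧ ¬ Good H (X.1 \ Y.1) := by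
    rintro ⟨X, hXA, hX⟩
    obtain ⟨Y, hY, h1, h2⟩ := hcon X hXA hX
    exact ⟨⟨Y, hY.trans hXA, h1⟩, hY, h2⟩
  choose f hf1 hf2 using hstep
  let S : ℕ → P := fun n => f^[n] ⟨A, subset_rfl, hA⟩
  have hS : ∀ n, S (n + 1) = f (S n) := fun n => Function.iterate_succ_apply' f n _
  have hanti : Antitone (fun n => (S n).1) := by
    apply antitone_nat_of_succ_le
    intro n
    change (S (n+1)).1 ⊆ (S n).1
    rw [hS]; exact hf1 _
  obtain ⟨j, hj⟩ := fact1 hm hu z hz (fun n => (S n).1 \ (S (n+1)).1) (by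
    refine (pairwise_disjoint_on _).2 ?_
    intro m n hmn
    rw [Set.disjoint_left]
    rintro x ⟨_, hx⟩ ⟨hx', _⟩
    exact hx (hanti (Nat.succ_le_of_lt hmn) hx'))
  rw [hS] at hj
  exact hf2 _ hj

lemma good_of_bounded (hm : Monotone H) (hu : ∀ g, ∃ t, g ∈ H t) (z : ∀ i, K i)
    (hz : ∀ M : Subgroup (∀ i, K i), M.Normal → z ∈ M → M = ⊤)
    (A : Set ι) (B : ℕ) (hB : ∀ i ∈ A, ∃ e : Fin B → K i, Function.Surjective e) :
    Good H A := by
  classical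
  by_contra hA
  obtain ⟨X, hXA, hX, hprime⟩ := exists_prime_set hm hu z hz A hA
  have hB' : ∀ i, ∃ e : Fin B → K i, i ∈ X → Function.Surjective e := by
    intro i
    by_cases hi : i ∈ X
    · obtain ⟨e, he⟩ := hB i (hXA hi)
      exact ⟨e, fun _ => he⟩
    · exact ⟨fun _ => 1, fun h => absurd h hi⟩
  choose e he using hB'
  let r : Fin B → ∀ i, K i := fun k i => e i k
  choose tr htr using fun k => hu (rho X (r k))
  let t0 := Finset.univ.sup tr
  have ht0 : ∀ k, rho X (r k) ∈ H t0 := fun k => hm (Finset.le_sup (Finset.mem_univ k)) (htr k)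
  -- finite unions
  have hfin : ∀ (s : Finset (Fin B)) (Q : Fin B → Set ι), (∀ k ∈ s, Good H (Q k)) →
      Good H (⋃ k ∈ s, Q k) := by
    intro s Q
    induction s using Finset.induction_on with
    | empty =>
      intro _
      refine ⟨0, fun g => ?_⟩
      have : rho (⋃ k ∈ (∅ : Finset (Fin B)), Q k) g = 1 := by
        funext i; simp [rho]
      rw [this]; exact one_mem _
    | insert a s ha ih =>
      intro h
      rw [Finset.set_biUnion_insert]
      exact (h a (Finset.mem_insert_self a s)).union hm
        (ih fun k hk => h k (Finset.mem_insert_of_mem hk))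
  have claimB : ∀ s, ∃ Y ⊆ X, Good H Y ∧ ∃ g, rho Y g ∉ H s := by
    intro s
    have : ∃ g, rho X g ∉ H (max s t0) := by
      by_contra h
      push Not at h
      exact hX ⟨_, h⟩
    obtain ⟨g, hg⟩ := this
    let Q : Fin B → Set ι := fun k => {i ∈ X | g i = r k i}
    have : ∃ k, ¬ Good H (Q k) := by
      by_contra h
      push Not at h
      apply hX
      apply (hfin Finset.univ Q fun k _ => h k).mono
      intro i hi
      obtain ⟨k, hk⟩ := he i hi (g i)
      simp only [Finset.mem_univ, Set.iUnion_true, Set.mem_iUnion]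
      exact ⟨k, hi, hk.symm⟩
    obtain ⟨k, hk⟩ := this
    have hgood := (hprime (Q k) (fun i hi => hi.1)).resolve_left hk
    refine ⟨X \ Q k, Set.sdiff_subset, hgood, g * (r k)⁻¹, fun hin => hg ?_⟩
    have : rho X g = rho (X \ Q k) (g * (r k)⁻¹) * rho X (r k) := by
      funext i
      by_cases hi : i ∈ X
      · by_cases hq : g i = r k i
        · simp [rho, hi, Q, hq]
        · simp [rho, hi, Q, hq]
      · simp [rho, hi]
    rw [this]
    exact mul_mem (hm (le_max_left _ _) hin) (hm (le_max_right _ _) (ht0 k))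
  let P := {Z : Set ι // Z ⊆ X ∧ Good H Z}
  have claimC : ∀ (s : ℕ) (Z : P), ∃ Y : P, Disjoint Z.1 Y.1 ∧ ∃ g, rho Y.1 g ∉ H s := by
    rintro s ⟨Z, hZX, hZ⟩
    obtain ⟨t, ht⟩ := id hZ
    obtain ⟨Y, hYX, hY, g, hg⟩ := claimB (max s t)
    refine ⟨⟨Y \ Z, Set.sdiff_subset.trans hYX, hY.mono Set.diff_subset⟩,
      Set.disjoint_sdiff_right, g, fun hin => hg ?_⟩
    have h1 : rho Y g = rho (Y \ Z) g * rho Z (rho Y g) := by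
      funext i
      by_cases hi : i ∈ Y <;> by_cases hz : i ∈ Z <;> simp [rho, hi, hz]
    rw [h1]
    exact mul_mem (hm (le_max_left _ _) hin) (hm (le_max_right _ _) (ht _))
  choose f hf1 hf2 using claimC
  let S : ℕ → P := fun n => Nat.rec ⟨∅, Set.empty_subset _, ⟨0, fun g => by
    have : rho (∅ : Set ι) g = 1 := by
      funext i; simp [rho]
    rw [this]; exact one_mem _⟩⟩
    (fun n Z => ⟨Z.1 ∪ (f n Z).1, Set.union_subset Z.2.1 (f n Z).2.1,
      Z.2.2.union hm (f n Z).2.2⟩) n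
  have hS : ∀ n, (S (n+1)).1 = (S n).1 ∪ (f n (S n)).1 := fun n => rfl
  let Y : ℕ → Set ι := fun n => (f n (S n)).1
  have hmono : Monotone (fun n => (S n).1) := by
    apply monotone_nat_of_le_succ
    intro n
    change (S n).1 ⊆ (S (n+1)).1
    rw [hS]; exact Set.subset_union_left
  have hdisj : ∀ m n, m < n → Disjoint (Y m) (Y n) := by
    intro m n hmn
    refine Disjoint.mono_left ?_ (hf1 n (S n))
    refine Set.Subset.trans ?_ (hmono (Nat.succ_le_of_lt hmn))
    change Y m ⊆ (S (m+1)).1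
    rw [hS]; exact Set.subset_union_right
  have hYbad : ∀ n, ∃ g, rho (Y n) g ∉ H n := fun n => hf2 n (S n)
  have final : ∀ (E : Set ι), Good H E → (∀ t, ∃ n ≥ t, Y n ⊆ E) → False := by
    rintro E ⟨t, ht⟩ h
    obtain ⟨n, hn, hE⟩ := h t
    obtain ⟨g, hg⟩ := hYbad n
    apply hg
    have := ht (rho (Y n) g)
    rw [rho_rho, Set.inter_eq_right.2 hE] at this
    exact hm hn this
  have hYX : ∀ n, Y n ⊆ X := fun n => (f n (S n)).2.1
  rcases hprime (⋃ k, Y (2*k)) (Set.iUnion_subset fun k => hYX _) with h | h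
  · exact final _ h fun t => ⟨2*t, by omega, Set.subset_iUnion (fun k => Y (2*k)) t⟩
  · refine final _ h fun t => ⟨2*t+1, by omega, fun x hx => ⟨hYX _ hx, ?_⟩⟩
    simp only [Set.mem_iUnion, not_exists]
    intro k hk
    rcases lt_or_gt_of_ne (show 2*k ≠ 2*t+1 by omega) with h | h
    · exact Set.disjoint_left.1 (hdisj _ _ h) hk hx
    · exact Set.disjoint_left.1 (hdisj _ _ h) hx hk

end abstract
end CofSp

namespace CofSp
open Polynomial Matrix

lemma exists_functional {R : Type*} [Field R] (I : Ideal R[X]) (hI : I ≠ ⊥) :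
    ∃ f : (R[X] ⧸ I) →ₗ[R] R, ∀ a, (∀ b, f (a * b) = 0) → a = 0 := by
  obtain ⟨g, hg, rfl⟩ : ∃ g : R[X], g.Monic ∧ I = Ideal.span {g} := by
    obtain ⟨g, rfl⟩ := (IsPrincipalIdealRing.principal I).principal
    have hg : g ≠ 0 := by
      rintro rfl
      apply hI
      simp
    refine ⟨g * C g.leadingCoeff⁻¹, monic_mul_leadingCoeff_inv hg, ?_⟩
    symm
    apply Ideal.span_singleton_mul_right_unit
    exact isUnit_C.2 (by simpa using hg)
  let L : AdjoinRoot g →ₗ[R] R := (lcoeff R (g.natDegree - 1)) ∘ₗ (AdjoinRoot.modByMonicHom hg)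
  refine ⟨L, ?_⟩
  intro a
  obtain ⟨p, rfl⟩ := AdjoinRoot.mk_surjective (g := g) a
  intro hb
  change AdjoinRoot.mk g p = 0
  have hpq : AdjoinRoot.mk g p = AdjoinRoot.mk g (p %ₘ g) := by
    rw [AdjoinRoot.mk_eq_mk]
    nth_rewrite 1 [← modByMonic_add_div p g]
    simp
  set q := p %ₘ g with hq
  by_contra hne
  have hq0 : q ≠ 0 := by
    intro h
    rw [hpq, h] at hne
    simp at hne
  have hdeg : q.degree < g.degree := degree_modByMonic_lt p hg
  have hnd : q.natDegree < g.natDegree := natDegree_lt_natDegree hq0 hdeg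
  have h1 := hb (AdjoinRoot.mk g (X ^ (g.natDegree - 1 - q.natDegree)))
  have h2 : L (AdjoinRoot.mk g p * AdjoinRoot.mk g (X ^ (g.natDegree - 1 - q.natDegree))) = 0 := h1
  rw [hpq, ← map_mul] at h2
  have h3 : (q * X ^ (g.natDegree - 1 - q.natDegree)) %ₘ g =
      q * X ^ (g.natDegree - 1 - q.natDegree) := by
    rw [modByMonic_eq_self_iff hg, degree_mul, degree_X_pow, degree_eq_natDegree hq0,
      degree_eq_natDegree hg.ne_zero, ← Nat.cast_add]
    exact_mod_cast by omega
  have h4 : L (AdjoinRoot.mk g (q * X ^ (g.natDegree - 1 - q.natDegree))) =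
      (q * X ^ (g.natDegree - 1 - q.natDegree)).coeff (g.natDegree - 1) := by
    simp only [L, LinearMap.comp_apply, AdjoinRoot.modByMonicHom_mk, h3, lcoeff_apply]
  rw [h4] at h2
  have h5 : g.natDegree - 1 = q.natDegree + (g.natDegree - 1 - q.natDegree) := by omega
  rw [h5] at h2
  simp [coeff_mul_X_pow, hq0] at h2

/-- Every square matrix over a field is a product of two symmetric ones, the first of which
is invertible (Frobenius). -/
lemma frobenius {R l : Type*} [Field R] [Fintype l] [DecidableEq l] (A : Matrix l l R) :
    ∃ S : Matrix l l R, S.IsSymm ∧ IsUnit S ∧ (S * A).IsSymm := by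
  classical
  let φ := Matrix.toLin' A
  obtain ⟨ι, _, p, hp, e, ⟨E⟩⟩ := Module.equiv_directSum_of_isTorsion
    (R := R[X]) (M := Module.AEval' φ) (Module.AEval.isTorsion_of_finiteDimensional R _ φ)
  have hI : ∀ i, (Ideal.span {p i ^ e i} : Ideal R[X]) ≠ ⊥ := by
    intro i h
    rw [Ideal.span_singleton_eq_bot] at h
    exact (hp i).ne_zero (eq_zero_of_pow_eq_zero h)
  choose f hf using fun i => exists_functional _ (hI i)
  let c : ∀ i, (l → R) →ₗ[R] (R[X] ⧸ (Ideal.span {p i ^ e i} : Ideal R[X])) := fun i =>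
    { toFun := fun x => (E (Module.AEval'.of φ x)) i
      map_add' := fun x y => by simp
      map_smul' := fun r x => by
        have : E (Module.AEval'.of φ (r • x)) = (C r : R[X]) • E (Module.AEval'.of φ x) := by
          rw [← map_smul, Module.AEval.C_smul, map_smul]
        rw [this, DirectSum.smul_apply]
        rw [RingHom.id_apply, ← algebraMap_smul R[X] r]
        rfl }
  have hcX : ∀ i x, c i (φ x) = (Ideal.Quotient.mk _ X) * c i x := by
    intro i x
    change (E (Module.AEval'.of φ (φ x))) i = _
    rw [← Module.AEval'.X_smul_of, map_smul, DirectSum.smul_apply]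
    rfl
  have hcinj : ∀ x, (∀ i, c i x = 0) → x = 0 := by
    intro x hx
    have : E (Module.AEval'.of φ x) = 0 := by
      ext i
      exact hx i
    simpa using this
  have hcsurj : ∀ i b, ∃ y, c i y = b ∧ ∀ j, j ≠ i → c j y = 0 := by
    intro i b
    refine ⟨(Module.AEval'.of φ).symm (E.symm (DirectSum.of
      (fun i => R[X] ⧸ Submodule.span R[X] {p i ^ e i}) i b)), ?_, ?_⟩
    · change (E (Module.AEval'.of φ _)) i = b
      simp
    · intro j hj
      change (E (Module.AEval'.of φ _)) j = 0
      simp [DirectSum.of_eq_of_ne _ _ _ hj]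
  let B : (l → R) → (l → R) →ₗ[R] R := fun x => ∑ i, (f i) ∘ₗ (LinearMap.mulLeft R (c i x)) ∘ₗ (c i)
  have hB : ∀ x y, B x y = ∑ i, f i (c i x * c i y) := by
    intro x y; simp [B]
  have hBs : ∀ x y, B x y = B y x := by
    intro x y; rw [hB, hB]; simp_rw [mul_comm]
  have hBA : ∀ x y, B (φ x) y = B x (φ y) := by
    intro x y; rw [hB, hB]; simp_rw [hcX]
    congr! 2 with i
    ring
  have hnd : ∀ x, (∀ y, B x y = 0) → x = 0 := by
    intro x hx
    apply hcinj
    intro i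
    apply hf i
    intro b
    obtain ⟨y, hy, hy'⟩ := hcsurj i b
    have := hx y
    rw [hB, Finset.sum_eq_single i] at this
    · rwa [hy] at this
    · intro j _ hj
      rw [hy' j hj]; simp
    · simp
  let S : Matrix l l R := Matrix.of fun i j => B (Pi.single i 1) (Pi.single j 1)
  have hSv : ∀ i x, (S *ᵥ x) i = B (Pi.single i 1) x := by
    intro i x
    nth_rewrite 2 [pi_eq_sum_univ' x]
    rw [map_sum]
    simp only [Matrix.mulVec, dotProduct]
    apply Finset.sum_congr rfl
    intro j _
    rw [map_smul]
    simp only [S, Matrix.of_apply, smul_eq_mul, mul_comm]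
  refine ⟨S, ?_, ?_, ?_⟩
  · ext i j; exact hBs _ _
  · rw [← Matrix.mulVec_injective_iff_isUnit, ← Matrix.coe_mulVecLin, ← LinearMap.ker_eq_bot,
      Matrix.ker_mulVecLin_eq_bot_iff]
    intro x hx
    apply hnd
    intro y
    rw [hBs]
    have h0 : ∀ i, B x (Pi.single i 1) = 0 := by
      intro i
      rw [hBs, ← hSv, hx]; rfl
    rw [hBs, pi_eq_sum_univ' y, map_sum]
    apply Finset.sum_eq_zero
    intro j _
    rw [map_smul]
    have h1 := h0 j
    simp only [smul_eq_mul, mul_eq_zero]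
    right
    convert h1 using 2
  · have hSA : ∀ i j, (S * A) i j = B (Pi.single i 1) (φ (Pi.single j 1)) := by
      intro i j
      rw [← hSv]
      rw [Matrix.toLin'_apply, Matrix.mulVec_single_one]
      rfl
    ext i j
    rw [Matrix.transpose_apply, hSA, hSA, ← hBA, hBs]

end CofSp

namespace CofSp
open Matrix

lemma exists_symmetric_X_invertible_add_mul_of_ker_inter_eq_bot {l R : Type*} [DecidableEq l] [Fintype l] [Field R]
    {A C : Matrix l l R} (hker : ∀ (x : l → R), (A • x = 0) → (C • x = 0) → x = 0)
    (hsymm : Aᵀ * C = Cᵀ * A) :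
    ∃ (X : Matrix l l R), X.IsSymm ∧ IsUnit (A + X * C) := by
  -- `C` is transformed into `P = fromBlocks 1 0 0 0` by invertible matrices `V` and `U`.
  rcases exists_rank_normal_form C with ⟨V, U, s, hV, hU, heq⟩
  set P := V * C * U with P_def; set Q := Vᵀ⁻¹ * A * U with Q_def
  set f := fun (x : Matrix l l R) ↦ x.submatrix s.symm s.symm
  have hf (x) : f x = x.submatrix s.symm s.symm := rfl
  have f_unit {x} : IsUnit x → IsUnit (f x) := (isUnit_submatrix_equiv ..).2
  have f_mul (x y) : f (x * y) = f x * f y := submatrix_mul _ _ _ _ _ s.symm.bijective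
  have _ : Invertible V := hV.invertible
  have _ : Invertible U := hU.invertible
  have _ : Invertible (f Vᵀ) := (f_unit (V.isUnit_transpose.2 hV)).invertible
  -- The hypothesis that the only vector annihilated by both matrices is 0, holds for `P` and `Q`.
  have con1 (x : Fin C.rank ⊕ Fin (Fintype.card l - C.rank) → R)
      (heq1 : (f Q) • x = 0) (heq2 : (f P) • x = 0) : x = 0 := by
    refine (f_unit hU).smul_left_cancel.1 ?_
    rw [f_mul, f_mul, mul_assoc, mul_smul, IsUnit.smul_eq_zero, mul_smul, hf,
      smul_eq_mulVec, submatrix_mulVec_equiv, Equiv.symm_symm] at heq1 heq2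
    · rw [Equiv.comp_symm_eq, Pi.zero_comp] at heq1 heq2
      exact s.surjective.injective_comp_right <| by simpa using hker _ heq1 heq2
    · exact f_unit hV
    · exact f_unit <| isUnit_nonsing_inv_iff.2 <| V.isUnit_transpose.2 hV
  -- The symmetry relation also holds for `P` and `Q`.
  have con2 : Qᵀ * P = Pᵀ * Q := by
    simp only [P_def, mul_assoc, transpose_mul, transpose_nonsing_inv, transpose_transpose, Q_def,
      inv_mul_cancel_left_of_invertible, mul_inv_cancel_left_of_invertible]
    rw [← mul_assoc Aᵀ, hsymm, mul_assoc]
  replace con2 : (f Q).toBlocks₁₁ᵀ = (f Q).toBlocks₁₁ ∧ (f Q).toBlocks₁₂ = 0 := by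
    apply_fun reindex s s at con2
    rw [reindex_apply, reindex_apply, ← hf, ← hf, f_mul, f_mul Pᵀ, heq, hf,
      ← transpose_submatrix, ← hf Q, ← (f Q).fromBlocks_toBlocks, hf (_)ᵀ, hf
      ((fromBlocks 1 0 0 0).submatrix _ _)] at con2
    simp [fromBlocks_transpose, fromBlocks_multiply] at con2; tauto
  -- The lower-right block of `Q` is invertible.
  have con3 : IsUnit (f Q).toBlocks₂₂ := by
    refine mulVec_injective_iff_isUnit.1 ?_
    rw [← coe_mulVecLin, ← LinearMap.ker_eq_bot]
    refine ker_mulVecLin_eq_bot_iff.2 fun x hx ↦ Sum.elim_injective' <|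
      (con1 _ ?_ ?_).trans Sum.elim_zero_zero.symm
    · rw [← (f Q).fromBlocks_toBlocks]; simp [hx, con2.2, fromBlocks_mulVec]
    · simp [hf, heq, fromBlocks_mulVec]
  set Y : Matrix (Fin C.rank ⊕ Fin (Fintype.card l - C.rank)) (Fin C.rank ⊕
    Fin (Fintype.card l - C.rank)) R := fromBlocks (1 - (f Q).toBlocks₁₁) 0 0 0 with Y_def
  have hY_symm : Y.IsSymm := by
    rw [Y_def, isSymm_fromBlocks_iff]
    exact ⟨IsSymm.sub isSymm_one con2.1, by simp⟩
  -- We now take `X = Vᵀ * Y * V` and this gives the desired matrix `X.submatrix s s`.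
  set X := (f Vᵀ) * Y * (f V) with X_def
  refine ⟨X.submatrix s s, IsSymm.submatrix ?_ s, (isUnit_submatrix_equiv s.symm s.symm).1 ?_⟩
  · simp_rw [X_def, Matrix.IsSymm, transpose_mul, hY_symm.eq, hf, transpose_submatrix,
      transpose_transpose, mul_assoc]
  · have heq' : f (A + X.submatrix s s * C) = (f Vᵀ) * (f Q + Y * (f P)) * f (U⁻¹) := by
      simp_rw [hf, submatrix_add, Pi.add_apply, Q_def, P_def, ← hf, f_mul, hf, mul_add, ← mul_assoc,
        ← inv_submatrix_equiv, add_mul, mul_assoc _ (U.submatrix _ _), mul_inv_of_invertible]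
      simp [X_def]; rfl
    rw [← hf, heq', IsUnit.mul_iff, IsUnit.mul_iff]
    refine ⟨⟨isUnit_of_invertible _, ?_⟩, ?_⟩
    · nth_rw 1 [Y_def, heq, ← (f Q).fromBlocks_toBlocks, con2.2]
      simpa [hf, fromBlocks_multiply, fromBlocks_add]
    · exact f_unit <| isUnit_nonsing_inv_iff.2 hU

/-- Symmetric matrices. -/
abbrev SM (l R : Type*) := {X : Matrix l l R // X.IsSymm}

section sp
variable {l R : Type*} [DecidableEq l] [Fintype l] [CommRing R]

/-- Upper unipotent symplectic matrices. -/
def U (X : SM l R) : symplecticGroup l R :=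
  ⟨fromBlocks 1 X.1 0 1, by
    rw [SymplecticGroup.fromBlocks_mem_iff]
    simp [X.2.eq]⟩

/-- Lower unipotent symplectic matrices. -/
def V (X : SM l R) : symplecticGroup l R :=
  ⟨fromBlocks 1 0 X.1 1, by
    rw [SymplecticGroup.fromBlocks_mem_iff]
    simp [X.2.eq]⟩

/-- Levi elements. -/
def Lv (A : (Matrix l l R)ˣ) : symplecticGroup l R :=
  ⟨fromBlocks A.1 0 0 (A⁻¹).1ᵀ, by
    rw [SymplecticGroup.fromBlocks_mem_iff]
    refine ⟨by simp, by simp, ?_⟩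
    rw [← transpose_mul]; simp⟩

lemma U_add (X Y : SM l R) : U ⟨X.1 + Y.1, X.2.add Y.2⟩ = U X * U Y := by
  apply Subtype.ext
  simp [U, fromBlocks_multiply, add_comm]

lemma U_zero : U (⟨0, isSymm_zero⟩ : SM l R) = 1 := by
  apply Subtype.ext
  simp [U]

lemma U_neg (X : SM l R) : U ⟨-X.1, X.2.neg⟩ = (U X)⁻¹ := by
  apply eq_inv_of_mul_eq_one_left
  apply Subtype.ext
  simp [U, fromBlocks_multiply]

lemma V_neg (X : SM l R) : V ⟨-X.1, X.2.neg⟩ = (V X)⁻¹ := by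
  apply eq_inv_of_mul_eq_one_left
  apply Subtype.ext
  simp [V, fromBlocks_multiply]

lemma J_conj_U (X : SM l R) :
    SymplecticGroup.symJ l R * (U X)⁻¹ * (SymplecticGroup.symJ l R)⁻¹ = V X := by
  rw [mul_inv_eq_iff_eq_mul, ← U_neg]
  apply Subtype.ext
  simp [U, V, fromBlocks_multiply, J]

lemma conj_symm (A : Matrix l l R) (X : SM l R) : (A * X.1 * Aᵀ).IsSymm := by
  rw [IsSymm, transpose_mul, transpose_mul, transpose_transpose, X.2.eq, Matrix.mul_assoc]

lemma Lv_conj_U (A : (Matrix l l R)ˣ) (X : SM l R) :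
    Lv A * U X * (Lv A)⁻¹ = U ⟨A.1 * X.1 * A.1ᵀ, conj_symm A.1 X⟩ := by
  rw [mul_inv_eq_iff_eq_mul]
  apply Subtype.ext
  have : A.1ᵀ * (A⁻¹).1ᵀ = 1 := by rw [← transpose_mul]; simp
  simp only [U, Lv, Submonoid.mk_mul_mk, fromBlocks_multiply]
  simp [-Matrix.coe_units_inv, Matrix.mul_assoc, this]

lemma Lv_mul (A B : (Matrix l l R)ˣ) : Lv (A * B) = Lv A * Lv B := by
  apply Subtype.ext
  simp [Lv, fromBlocks_multiply]

lemma inv_symm (A : (Matrix l l R)ˣ) (hA : A.1.IsSymm) : (A⁻¹).1.IsSymm := by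
  have h : (A⁻¹).1ᵀ * A.1 = 1 := by
    calc (A⁻¹).1ᵀ * A.1 = (A⁻¹).1ᵀ * A.1ᵀ := by rw [hA.eq]
      _ = 1 := by rw [← transpose_mul]; simp
  have h2 : (A⁻¹).1ᵀ * A.1 * (A⁻¹).1 = (A⁻¹).1 := by rw [h, one_mul]
  rw [Matrix.mul_assoc, Units.mul_inv, mul_one] at h2
  exact h2

lemma Lv_symm (A : (Matrix l l R)ˣ) (hA : A.1.IsSymm) :
    Lv A = U ⟨A.1, hA⟩ * (V ⟨(A⁻¹).1, inv_symm A hA⟩)⁻¹ * U ⟨A.1, hA⟩ *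
      ((U ⟨1, isSymm_one⟩)⁻¹ * V ⟨1, isSymm_one⟩ * (U ⟨1, isSymm_one⟩)⁻¹) := by
  rw [← U_neg, ← V_neg]
  apply Subtype.ext
  simp [-Matrix.coe_units_inv, U, V, Lv, fromBlocks_multiply, (inv_symm A hA).eq]

end sp

section field
variable {l R : Type*} [DecidableEq l] [Fintype l] [Field R]

lemma exists_symm_factor (A : (Matrix l l R)ˣ) :
    ∃ S T : (Matrix l l R)ˣ, S.1.IsSymm ∧ T.1.IsSymm ∧ A = S * T := by
  obtain ⟨S, hS, ⟨S', rfl⟩, hSA⟩ := frobenius A.1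
  exact ⟨S'⁻¹, S' * A, inv_symm _ hS, hSA, by simp⟩

lemma exists_decomp (g : symplecticGroup l R) :
    ∃ (X Y Z : SM l R) (A : (Matrix l l R)ˣ), g = U X * V Y * Lv A * U Z := by
  obtain ⟨g, hg⟩ := g
  obtain ⟨A, B, C, D, rfl⟩ : ∃ A B C D, g = fromBlocks A B C D :=
    ⟨_, _, _, _, (fromBlocks_toBlocks g).symm⟩
  have h := SymplecticGroup.fromBlocks_mem_iff.1 hg
  obtain ⟨X, hX, hu⟩ := exists_symmetric_X_invertible_add_mul_of_ker_inter_eq_bot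
    (A := A) (C := C) (fun x h1 h2 => by
      have hunit : IsUnit (fromBlocks A B C D) :=
        (isUnit_iff_isUnit_det _).2 (SymplecticGroup.symplectic_det hg)
      have hv0 : (fromBlocks A B C D) *ᵥ (Sum.elim x 0) =
          (fromBlocks A B C D) *ᵥ (Sum.elim 0 0) := by
        rw [smul_eq_mulVec] at h1 h2
        simp [fromBlocks_mulVec, h1, h2]
      exact (Sum.elim_eq_iff.1 (mulVec_injective_iff_isUnit.2 hunit hv0)).1) h.1
  obtain ⟨A', hA'⟩ := hu
  -- the element `U X * g`
  have h1 : (U ⟨X, hX⟩ * ⟨fromBlocks A B C D, hg⟩ : symplecticGroup l R).1 =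
      fromBlocks A'.1 (B + X * D) C D := by
    simp [U, fromBlocks_multiply, hA']
  have h1m := (U ⟨X, hX⟩ * ⟨fromBlocks A B C D, hg⟩ : symplecticGroup l R).2
  rw [h1] at h1m
  have h1b := SymplecticGroup.fromBlocks_mem_iff.1 h1m
  have hY : (C * (A'⁻¹).1).IsSymm := by
    have e1 : (A'⁻¹).1ᵀ * (A'.1ᵀ * C) * (A'⁻¹).1 = (A'⁻¹).1ᵀ * (Cᵀ * A'.1) * (A'⁻¹).1 := by
      rw [h1b.1]
    rw [← Matrix.mul_assoc, ← transpose_mul, Units.mul_inv, transpose_one, one_mul,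
      ← Matrix.mul_assoc, Matrix.mul_assoc, Units.mul_inv, mul_one, ← transpose_mul] at e1
    exact e1.symm
  have h2 : ((V ⟨C * (A'⁻¹).1, hY⟩)⁻¹ *
      (U ⟨X, hX⟩ * ⟨fromBlocks A B C D, hg⟩) : symplecticGroup l R).1 =
      fromBlocks A'.1 (B + X * D) 0 (D - C * (A'⁻¹).1 * (B + X * D)) := by
    rw [← V_neg, Submonoid.coe_mul, h1]
    simp [V, fromBlocks_multiply, Matrix.mul_assoc]
    abel
  have h2m := ((V ⟨C * (A'⁻¹).1, hY⟩)⁻¹ *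
      (U ⟨X, hX⟩ * ⟨fromBlocks A B C D, hg⟩) : symplecticGroup l R).2
  rw [h2] at h2m
  have h2b := SymplecticGroup.fromBlocks_mem_iff.1 h2m
  set B' := B + X * D
  set D' := D - C * (A'⁻¹).1 * B'
  have hD' : D' = (A'⁻¹).1ᵀ := by
    have e := h2b.2.2
    simp only [transpose_zero, zero_mul, sub_zero] at e
    have e2 : (A'⁻¹).1ᵀ * (A'.1ᵀ * D') = (A'⁻¹).1ᵀ := by rw [e, mul_one]
    rwa [← Matrix.mul_assoc, ← transpose_mul, Units.mul_inv, transpose_one, one_mul] at e2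
  have hZ : ((A'⁻¹).1 * B').IsSymm := by
    have e := h2b.2.1
    rw [hD', transpose_transpose, ← transpose_mul] at e
    exact e
  refine ⟨⟨-X, hX.neg⟩, ⟨C * (A'⁻¹).1, hY⟩, ⟨(A'⁻¹).1 * B', hZ⟩, A', ?_⟩
  have h3 : (V ⟨C * (A'⁻¹).1, hY⟩)⁻¹ *
      (U ⟨X, hX⟩ * ⟨fromBlocks A B C D, hg⟩) = Lv A' * U ⟨(A'⁻¹).1 * B', hZ⟩ := by
    apply Subtype.ext
    rw [h2]
    simp [Lv, U, fromBlocks_multiply, hD']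
  rw [inv_mul_eq_iff_eq_mul] at h3
  have hn : U ⟨-X, hX.neg⟩ = (U ⟨X, hX⟩)⁻¹ := U_neg ⟨X, hX⟩
  rw [hn, mul_assoc, mul_assoc, ← h3]
  group

end field

section prod
variable {ι : Type*} {l F : ι → Type*} [∀ i, DecidableEq (l i)] [∀ i, Fintype (l i)]
  [∀ i, Field (F i)]

/-- A subgroup containing all families of unipotents is everything. -/
lemma eq_top_of_unipotents (M : Subgroup (∀ i, symplecticGroup (l i) (F i)))
    (hU : ∀ X : ∀ i, SM (l i) (F i), (fun i => U (X i)) ∈ M)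
    (hV : ∀ X : ∀ i, SM (l i) (F i), (fun i => V (X i)) ∈ M) : M = ⊤ := by
  have hL1 : ∀ A : ∀ i, (Matrix (l i) (l i) (F i))ˣ, (∀ i, (A i).1.IsSymm) →
      (fun i => Lv (A i)) ∈ M := by
    intro A hA
    have h1 := hU fun i => ⟨(A i).1, hA i⟩
    have h2 := hV fun i => ⟨((A i)⁻¹).1, inv_symm (A i) (hA i)⟩
    have h3 := hU fun i => ⟨1, isSymm_one⟩
    have h4 := hV fun i => ⟨1, isSymm_one⟩
    have := mul_mem (mul_mem (mul_mem h1 (inv_mem h2)) h1)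
      (mul_mem (mul_mem (inv_mem h3) h4) (inv_mem h3))
    convert this using 1
    funext i
    exact Lv_symm (A i) (hA i)
  have hL : ∀ A : ∀ i, (Matrix (l i) (l i) (F i))ˣ, (fun i => Lv (A i)) ∈ M := by
    intro A
    choose S T hS hT hA using fun i => exists_symm_factor (A i)
    have := mul_mem (hL1 S hS) (hL1 T hT)
    convert this using 1
    funext i
    change _ = Lv (S i) * Lv (T i)
    rw [← Lv_mul, hA]
  rw [eq_top_iff]
  intro g _
  choose X Y Z A h using fun i => exists_decomp (g i)
  have := mul_mem (mul_mem (mul_mem (hU X) (hV Y)) (hL A)) (hU Z)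
  convert this using 1
  funext i
  exact h i

end prod
end CofSp

namespace CofSp
open Matrix

lemma exists_perm {α : Type*} [Fintype α] [DecidableEq α] (S T : Finset α)
    (h : S.card ≤ T.card) : ∃ σ : Equiv.Perm α, ∀ a ∈ S, σ a ∈ T := by
  obtain ⟨T', hT', hc⟩ := Finset.exists_subset_card_eq h
  let e : {x // x ∈ S} ≃ {x // x ∈ T'} := Fintype.equivOfCardEq (by simp [hc])
  refine ⟨e.extendSubtype, fun a ha => hT' ?_⟩
  rw [e.extendSubtype_apply_of_mem a ha]
  exact (e ⟨a, ha⟩).2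

/-- Permutation matrices as units. -/
def permU {α R : Type*} [Fintype α] [DecidableEq α] [CommRing R] (σ : Equiv.Perm α) :
    (Matrix α α R)ˣ where
  val := (1 : Matrix α α R).submatrix σ id
  inv := (1 : Matrix α α R).submatrix σ.symm id
  val_inv := by
    ext i j
    rw [Matrix.mul_apply, Finset.sum_eq_single (σ i)]
    · simp [Matrix.one_apply]
    · intro b _ hb
      simp [Matrix.one_apply, hb.symm]
    · simp
  inv_val := by
    ext i j
    rw [Matrix.mul_apply, Finset.sum_eq_single (σ.symm i)]
    · simp [Matrix.one_apply]
    · intro b _ hb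
      simp [Matrix.one_apply, hb.symm]
    · simp

lemma permU_conj {α R : Type*} [Fintype α] [DecidableEq α] [CommRing R] (σ : Equiv.Perm α)
    (X : Matrix α α R) : (permU σ).1 * X * (permU σ).1ᵀ = X.submatrix σ σ := by
  ext i j; simp [permU, Matrix.mul_apply, Matrix.one_apply]

lemma fiber_card (d e r : ℕ) (c : Fin d → Fin r) (hc : ∀ a, (c a : ℕ) = a / e)
    (hd : d ≤ r * e) (x : Fin r) : (Finset.univ.filter fun a => c a = x).card ≤ e := by
  rcases Nat.eq_zero_or_pos e with rfl | he
  · have : d = 0 := by simpa using hd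
    subst this
    simp
  · have := Finset.card_le_card_of_injOn (s := Finset.univ.filter fun a => c a = x)
      (t := Finset.range e) (fun a : Fin d => (a : ℕ) % e)
      (fun a _ => by simpa using Nat.mod_lt _ he)
      (fun a ha b hb hab => by
        simp only [Finset.coe_filter, Finset.mem_univ, true_and, Set.mem_ofPred_eq] at ha hb
        have h1 : (a : ℕ) / e = b / e := by rw [← hc, ← hc, ha, hb]
        apply Fin.ext
        rw [← Nat.div_add_mod (a : ℕ) e, ← Nat.div_add_mod (b : ℕ) e, h1]
        simp only at hab
        rw [hab])
    simpa using this

lemma sym2_fiber_card (d e r : ℕ) (c : Fin d → Fin r) (hc : ∀ a, (c a : ℕ) = a / e)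
    (hd : d ≤ r * e) (p : Sym2 (Fin r)) :
    (Finset.univ.filter fun a => c a ∈ p).card ≤ 2 * e := by
  classical
  induction p using Sym2.ind with
  | _ x y =>
    have h1 := fiber_card d e r c hc hd x
    have h2 := fiber_card d e r c hc hd y
    have : (Finset.univ.filter fun a => c a ∈ s(x, y)) ⊆
        (Finset.univ.filter fun a => c a = x) ∪ (Finset.univ.filter fun a => c a = y) := by
      intro a
      simp [Sym2.mem_iff]
    have h3 := (Finset.card_le_card this).trans (Finset.card_union_le _ _)
    omega

section prod
variable {ι : Type*} {d : ι → ℕ} {F : ι → Type*} [∀ i, Field (F i)]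

lemma eq_top_of_supported (T : ∀ i, Finset (Fin (d i))) (r : ℕ)
    (hr : ∀ i, d i ≤ r * ((T i).card / 2)) :
    ∃ S : Set (∀ i, symplecticGroup (Fin (d i)) (F i)), S.Finite ∧
      ∀ M : Subgroup (∀ i, symplecticGroup (Fin (d i)) (F i)),
        (∀ s ∈ S, s ∈ Subgroup.normalizer (M : Set (∀ i, symplecticGroup (Fin (d i)) (F i)))) →
        (∀ X : ∀ i, SM (Fin (d i)) (F i), (∀ i a b, (X i).1 a b ≠ 0 → a ∈ T i ∧ b ∈ T i) →
          (fun i => U (X i)) ∈ M) → M = ⊤ := by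
  classical
  let c : ∀ i, Fin (d i) → Fin r := fun i a => ⟨a / ((T i).card / 2), by
    apply Nat.div_lt_of_lt_mul
    rw [mul_comm]
    exact a.2.trans_le (hr i)⟩
  have hσ : ∀ (p : Sym2 (Fin r)) (i : ι), ∃ σ : Equiv.Perm (Fin (d i)),
      ∀ a, c i a ∈ p → σ a ∈ T i := by
    intro p i
    obtain ⟨σ, h⟩ := exists_perm (Finset.univ.filter fun a => c i a ∈ p) (T i)
      ((sym2_fiber_card (d i) _ r (c i) (fun a => rfl) (hr i) p).trans
        (Nat.mul_div_le _ _))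
    exact ⟨σ, fun a ha => h a (by simpa using ha)⟩
  choose σ hσ using hσ
  refine ⟨insert (fun i => SymplecticGroup.symJ _ _)
    (Set.range fun p : Sym2 (Fin r) => fun i => Lv (permU (σ p i))),
    (Set.finite_range _).insert _, ?_⟩
  intro M hS hT
  have hJ := hS _ (Set.mem_insert _ _)
  have hp : ∀ p, (fun i => Lv (permU (σ p i))) ∈
      Subgroup.normalizer (M : Set (∀ i, symplecticGroup (Fin (d i)) (F i))) :=
    fun p => hS _ (Set.mem_insert_of_mem _ ⟨p, rfl⟩)
  have hsupp : ∀ (p : Sym2 (Fin r)) (X : ∀ i, SM (Fin (d i)) (F i)),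
      (∀ i a b, (X i).1 a b ≠ 0 → c i a ∈ p ∧ c i b ∈ p) → (fun i => U (X i)) ∈ M := by
    intro p X hX
    have h1 := hT (fun i => ⟨(X i).1.submatrix (σ p i).symm (σ p i).symm, (X i).2.submatrix _⟩)
      (by
        intro i a b hab
        obtain ⟨ha, hb⟩ := hX i _ _ hab
        have h1 := hσ p i _ ha
        have h2 := hσ p i _ hb
        simp only [Equiv.apply_symm_apply] at h1 h2
        exact ⟨h1, h2⟩)
    have h2 := (Subgroup.mem_normalizer_iff.1 (hp p) _).1 h1
    convert h2 using 1
    funext i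
    simp only [Pi.mul_apply, Pi.inv_apply]
    rw [Lv_conj_U]
    congr 1
    apply Subtype.ext
    simp only
    rw [permU_conj]
    simp
  have hU : ∀ X : ∀ i, SM (Fin (d i)) (F i), (fun i => U (X i)) ∈ M := by
    intro X
    have hmk : ∀ (s : Finset (Sym2 (Fin r))) (i : ι), (Matrix.of fun a b =>
        if s(c i a, c i b) ∈ s then (X i).1 a b else 0).IsSymm := by
      intro s i
      ext a b
      simp only [Matrix.transpose_apply, Matrix.of_apply]
      rw [Sym2.eq_swap, (X i).2.apply]
    have key : ∀ s : Finset (Sym2 (Fin r)), (fun i => U ⟨_, hmk s i⟩) ∈ M := by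
      intro s
      induction s using Finset.induction_on with
      | empty =>
        convert one_mem M using 1
        funext i
        simp only [Pi.one_apply]
        rw [← U_zero]
        congr 1
      | insert p s hps ih =>
        have h1 := hsupp p (fun i => ⟨_, hmk {p} i⟩) (by
          intro i a b hab
          simp only [Matrix.of_apply, ne_eq, ite_eq_right_iff, Classical.not_imp,
            Finset.mem_singleton] at hab
          rw [← hab.1]
          simp)
        convert mul_mem h1 ih using 1
        funext i
        simp only [Pi.mul_apply]
        rw [← U_add]
        congr 1
        apply Subtype.ext
        ext a b
        simp only [Matrix.of_apply, Matrix.add_apply, Finset.mem_insert, Finset.mem_singleton]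
        by_cases h1 : s(c i a, c i b) = p
        · simp [h1, hps]
        · simp [h1]
    convert key Finset.univ using 1
    funext i
    congr 1
    apply Subtype.ext
    ext a b
    simp
  apply eq_top_of_unipotents M hU
  intro X
  have h2 := (Subgroup.mem_normalizer_iff.1 hJ _).1 (inv_mem (hU X))
  convert h2 using 1
  funext i
  exact (J_conj_U (X i)).symm

end prod

section frames
variable {α β γ R : Type*} [Fintype α] [DecidableEq α] [CommRing R]

/-- The coordinate frame of a map. -/
def fr (R : Type*) [CommRing R] (f : β → α) : Matrix α β R := (1 : Matrix α α R).submatrix id f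

lemma fr_tr_mul (f : β → α) (g : γ → α) :
    (fr R f)ᵀ * fr R g = (1 : Matrix α α R).submatrix f g := by
  ext i j; simp [fr, Matrix.mul_apply, Matrix.one_apply]

lemma fr_tr_mul_self [DecidableEq β] (f : β → α) (hf : Function.Injective f) :
    (fr R f)ᵀ * fr R f = 1 := by
  rw [fr_tr_mul]
  ext i j
  simp [Matrix.one_apply, hf.eq_iff]

lemma fr_tr_mul_ne (f : β → α) (g : γ → α) (h : ∀ b c, f b ≠ g c) :
    (fr R f)ᵀ * fr R g = 0 := by
  rw [fr_tr_mul]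
  ext i j
  simp [h]

open Classical in
lemma fr_mul_tr [Fintype β] (f : β → α) (hf : Function.Injective f) :
    fr R f * (fr R f)ᵀ = diagonal fun a => if a ∈ Set.range f then (1 : R) else 0 := by
  ext i j
  simp only [fr, Matrix.mul_apply, Matrix.one_apply, submatrix_apply, id, transpose_apply,
    diagonal_apply]
  by_cases hi : i ∈ Set.range f
  · obtain ⟨b, rfl⟩ := hi
    rw [Finset.sum_eq_single b]
    · simp [eq_comm]
    · intro b' _ hb
      simp [hf.eq_iff, hb.symm]
    · simp
  · have : ∀ b, i ≠ f b := fun b h => hi ⟨b, h.symm⟩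
    simp [this, hi]

lemma diag_supp (T : α → Prop) [DecidablePred T] (X : Matrix α α R)
    (hX : ∀ a b, X a b ≠ 0 → T a ∧ T b) :
    (diagonal fun a => if T a then (1 : R) else 0) * X *
      (diagonal fun a => if T a then (1 : R) else 0) = X := by
  ext a b
  rw [mul_diagonal, diagonal_mul]
  by_cases h : X a b = 0
  · simp [h]
  · simp [hX a b h]

end frames

section blocks
variable {l k R : Type*} [Fintype l] [DecidableEq l] [Fintype k] [DecidableEq k] [CommRing R]

/-- Off-diagonal symmetric block. -/
def blk (P Q : Matrix l k R) (T : Matrix k k R) : SM l R :=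
  ⟨P * T * Qᵀ + Q * Tᵀ * Pᵀ, by
    rw [IsSymm, transpose_add]
    simp only [transpose_mul, transpose_transpose]
    rw [add_comm]
    simp only [Matrix.mul_assoc]⟩

/-- Diagonal symmetric block. -/
def dg (P : Matrix l k R) (T : SM k R) : SM l R :=
  ⟨P * T.1 * Pᵀ, by
    rw [IsSymm]
    simp only [transpose_mul, transpose_transpose, T.2.eq, Matrix.mul_assoc]⟩

lemma conj_blk (A : (Matrix l l R)ˣ) (P Q : Matrix l k R) (T : Matrix k k R) :
    Lv A * U (blk P Q T) * (Lv A)⁻¹ = U (blk (A.1 * P) (A.1 * Q) T) := by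
  rw [Lv_conj_U]
  congr 1
  apply Subtype.ext
  simp only [blk, transpose_mul, Matrix.mul_add, Matrix.add_mul, Matrix.mul_assoc]

lemma conj_dg (A : (Matrix l l R)ˣ) (P : Matrix l k R) (T : SM k R) :
    Lv A * U (dg P T) * (Lv A)⁻¹ = U (dg (A.1 * P) T) := by
  rw [Lv_conj_U]
  congr 1
  apply Subtype.ext
  simp only [dg, transpose_mul, Matrix.mul_assoc]

lemma U_blk_add (P P' Q : Matrix l k R) (T : Matrix k k R) :
    U (blk (P + P') Q T) = U (blk P' Q T) * U (blk P Q T) := by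
  rw [← U_add]
  congr 1
  apply Subtype.ext
  simp only [blk, transpose_add, Matrix.mul_add, Matrix.add_mul]
  abel

lemma U_dg_add (P P' : Matrix l k R) (T : SM k R) :
    U (dg (P + P') T) = U (dg P' T) * U (blk P' P T.1) * U (dg P T) := by
  rw [← U_add, ← U_add]
  congr 1
  apply Subtype.ext
  simp only [blk, dg, transpose_add, Matrix.mul_add, Matrix.add_mul, T.2.eq]
  abel

/-- Elementary block matrix. -/
def elU (P Q : Matrix l k R) (h : Qᵀ * P = 0) : (Matrix l l R)ˣ where
  val := 1 + P * Qᵀ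
  inv := 1 - P * Qᵀ
  val_inv := by
    have : P * Qᵀ * (P * Qᵀ) = 0 := by
      rw [Matrix.mul_assoc, ← Matrix.mul_assoc Qᵀ, h]; simp
    rw [Matrix.add_mul, Matrix.mul_sub, Matrix.mul_sub, this]
    simp
  inv_val := by
    have : P * Qᵀ * (P * Qᵀ) = 0 := by
      rw [Matrix.mul_assoc, ← Matrix.mul_assoc Qᵀ, h]; simp
    rw [Matrix.sub_mul, Matrix.mul_add, Matrix.mul_add, this]
    simp

/-- Swap of two frames. -/
def swU (P Q : Matrix l k R) (hP : Pᵀ * P = 1) (hQ : Qᵀ * Q = 1) (hPQ : Pᵀ * Q = 0)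
    (hQP : Qᵀ * P = 0) : (Matrix l l R)ˣ :=
  have h : (1 - (P - Q) * (P - Q)ᵀ) * (1 - (P - Q) * (P - Q)ᵀ) = 1 := by
    have h1 : (P - Q)ᵀ * (P - Q) = 1 + 1 := by
      rw [transpose_sub, Matrix.sub_mul, Matrix.mul_sub, Matrix.mul_sub, hP, hQ, hPQ, hQP]
      simp
    have h2 : (P - Q) * (P - Q)ᵀ * ((P - Q) * (P - Q)ᵀ) =
        (P - Q) * (P - Q)ᵀ + (P - Q) * (P - Q)ᵀ := by
      rw [Matrix.mul_assoc, ← Matrix.mul_assoc (P - Q)ᵀ, h1, Matrix.add_mul, Matrix.mul_add,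
        Matrix.one_mul]
    rw [Matrix.sub_mul, Matrix.mul_sub, Matrix.mul_sub, h2]
    simp
  ⟨1 - (P - Q) * (P - Q)ᵀ, 1 - (P - Q) * (P - Q)ᵀ, h, h⟩

end blocks

/-- The start positions of the three blocks. -/
def pos {d e : ℕ} (t : ℕ) (ht : (t + 1) * e ≤ d) : Fin e → Fin d := fun b =>
  ⟨t * e + b, by have := b.2; rw [add_mul] at ht; omega⟩

lemma pos_inj {d e : ℕ} (t : ℕ) (ht : (t + 1) * e ≤ d) : Function.Injective (pos t ht) := by
  intro a b h
  simp only [pos, Fin.mk.injEq] at h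
  exact Fin.ext (by omega)

lemma pos_ne {d e : ℕ} (t t' : ℕ) (ht : (t + 1) * e ≤ d) (ht' : (t' + 1) * e ≤ d)
    (h : t < t') (a b : Fin e) : pos t ht a ≠ pos t' ht' b := by
  intro h'
  simp only [pos, Fin.mk.injEq] at h'
  have : (t + 1) * e ≤ t' * e := Nat.mul_le_mul_right _ h
  have h3 := a.2
  rw [add_mul] at this
  omega

section prod2
variable {ι : Type*} {d : ι → ℕ} {F : ι → Type*} [∀ i, Field (F i)]

/-- The product of symplectic groups of rank at least three is the normal closure of
a single element. -/
lemma exists_normal_generator (hd : ∀ i, 3 ≤ d i) :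
    ∃ z : ∀ i, symplecticGroup (Fin (d i)) (F i),
      ∀ M : Subgroup (∀ i, symplecticGroup (Fin (d i)) (F i)), M.Normal → z ∈ M → M = ⊤ := by
  classical
  let e : ι → ℕ := fun i => d i / 3
  have h3 : ∀ (t : ℕ), t ≤ 2 → ∀ i, (t + 1) * e i ≤ d i := by
    intro t ht i
    have : e i * 3 ≤ d i := Nat.div_mul_le_self _ _
    nlinarith
  let P0 : ∀ i, Matrix (Fin (d i)) (Fin (e i)) (F i) := fun i => fr _ (pos 0 (h3 0 (by simp) i))
  let P1 : ∀ i, Matrix (Fin (d i)) (Fin (e i)) (F i) := fun i => fr _ (pos 1 (h3 1 (by simp) i))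
  let P2 : ∀ i, Matrix (Fin (d i)) (Fin (e i)) (F i) := fun i => fr _ (pos 2 (h3 2 (by simp) i))
  have h00 : ∀ i, (P0 i)ᵀ * P0 i = 1 := fun i => fr_tr_mul_self _ (pos_inj _ _)
  have h11 : ∀ i, (P1 i)ᵀ * P1 i = 1 := fun i => fr_tr_mul_self _ (pos_inj _ _)
  have h22 : ∀ i, (P2 i)ᵀ * P2 i = 1 := fun i => fr_tr_mul_self _ (pos_inj _ _)
  have h01 : ∀ i, (P0 i)ᵀ * P1 i = 0 := fun i => fr_tr_mul_ne _ _ (pos_ne _ _ _ _ (by simp))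
  have h02 : ∀ i, (P0 i)ᵀ * P2 i = 0 := fun i => fr_tr_mul_ne _ _ (pos_ne _ _ _ _ (by simp))
  have h12 : ∀ i, (P1 i)ᵀ * P2 i = 0 := fun i => fr_tr_mul_ne _ _ (pos_ne _ _ _ _ (by simp))
  have h10 : ∀ i, (P1 i)ᵀ * P0 i = 0 := fun i =>
    fr_tr_mul_ne _ _ fun b c => (pos_ne _ _ _ _ (by simp) c b).symm
  have h20 : ∀ i, (P2 i)ᵀ * P0 i = 0 := fun i =>
    fr_tr_mul_ne _ _ fun b c => (pos_ne _ _ _ _ (by simp) c b).symm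
  have h21 : ∀ i, (P2 i)ᵀ * P1 i = 0 := fun i =>
    fr_tr_mul_ne _ _ fun b c => (pos_ne _ _ _ _ (by simp) c b).symm
  let z : ∀ i, symplecticGroup (Fin (d i)) (F i) := fun i => Lv (elU (P0 i) (P1 i) (h10 i))
  refine ⟨z, fun M hM hz => ?_⟩
  have hE0 : ∀ i, (elU (P0 i) (P1 i) (h10 i)).1 * P0 i = P0 i := by
    intro i
    simp only [elU, Matrix.add_mul, Matrix.mul_assoc, h10]; simp
  have hE1 : ∀ i, (elU (P0 i) (P1 i) (h10 i)).1 * P1 i = P1 i + P0 i := by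
    intro i
    simp only [elU, Matrix.add_mul, Matrix.mul_assoc, h11]; simp
  have hE2 : ∀ i, (elU (P0 i) (P1 i) (h10 i)).1 * P2 i = P2 i := by
    intro i
    simp only [elU, Matrix.add_mul, Matrix.mul_assoc, h12]; simp
  have hcomm : ∀ u : ∀ i, symplecticGroup (Fin (d i)) (F i), z * u * z⁻¹ * u⁻¹ ∈ M := by
    intro u
    have := mul_mem hz (hM.conj_mem _ (inv_mem hz) u)
    convert this using 1
    group
  have hconj : ∀ (A : ∀ i, (Matrix (Fin (d i)) (Fin (d i)) (F i))ˣ)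
      (u : ∀ i, symplecticGroup (Fin (d i)) (F i)), u ∈ M →
      (fun i => Lv (A i) * u i * (Lv (A i))⁻¹) ∈ M := by
    intro A u hu
    exact hM.conj_mem _ hu (fun i => Lv (A i))
  have s1 : ∀ T : ∀ i, Matrix (Fin (e i)) (Fin (e i)) (F i),
      (fun i => U (blk (P0 i) (P2 i) (T i))) ∈ M := by
    intro T
    convert hcomm (fun i => U (blk (P1 i) (P2 i) (T i))) using 1
    funext i
    simp only [Pi.mul_apply, Pi.inv_apply, z]
    rw [conj_blk, hE1, hE2, U_blk_add, mul_inv_cancel_right]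
  have s2 : ∀ T : ∀ i, Matrix (Fin (e i)) (Fin (e i)) (F i),
      (fun i => U (blk (P0 i) (P1 i) (T i))) ∈ M := by
    intro T
    convert hconj (fun i => swU (P1 i) (P2 i) (h11 i) (h22 i) (h12 i) (h21 i)) _ (s1 T) using 1
    funext i
    rw [conj_blk]
    congr 2
    · simp only [swU, Matrix.sub_mul, Matrix.mul_assoc, transpose_sub, h10, h20]; simp
    · simp only [swU, Matrix.sub_mul, Matrix.mul_assoc, transpose_sub, h12, h22]; simp
  have s3 : ∀ T : ∀ i, SM (Fin (e i)) (F i),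
      (fun i => U (dg (P0 i) (T i))) ∈ M := by
    intro T
    have h1 := mul_mem (hcomm (fun i => U (dg (P1 i) (T i))))
      (inv_mem (s2 fun i => (T i).1))
    convert h1 using 1
    funext i
    simp only [Pi.mul_apply, Pi.inv_apply, z]
    rw [conj_dg, hE1, U_dg_add]
    group
  have s4 : ∀ T : ∀ i, SM (Fin (e i)) (F i),
      (fun i => U (dg (P1 i) (T i))) ∈ M := by
    intro T
    convert hconj (fun i => swU (P0 i) (P1 i) (h00 i) (h11 i) (h01 i) (h10 i)) _ (s3 T) using 1
    funext i
    rw [conj_dg]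
    congr 2
    simp only [swU, Matrix.sub_mul, Matrix.mul_assoc, transpose_sub, h00, h10]; simp
  have hcard : ∀ i, (Finset.univ.filter fun a : Fin (d i) => (a : ℕ) < 2 * e i).card = 2 * e i := by
    intro i
    rw [Fin.card_filter_val_lt]
    have := h3 1 (by simp) i
    omega
  obtain ⟨S, -, hS⟩ := eq_top_of_supported (F := F)
    (fun i => Finset.univ.filter fun a : Fin (d i) => (a : ℕ) < 2 * e i) 5 (by
      intro i
      rw [hcard]
      have := hd i
      simp only [e]
      omega)
  apply hS M
  · intro s _
    rw [Subgroup.normalizer_eq_top_iff.2 hM]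
    trivial
  · intro X hX
    have hR : ∀ i (Q : Matrix (Fin (d i)) (Fin (e i)) (F i)), (Qᵀ * (X i).1 * Q).IsSymm := by
      intro i Q
      rw [IsSymm]
      simp only [transpose_mul, transpose_transpose, (X i).2.eq, Matrix.mul_assoc]
    have h1 := s3 fun i => ⟨(P0 i)ᵀ * (X i).1 * P0 i, hR i _⟩
    have h2 := s4 fun i => ⟨(P1 i)ᵀ * (X i).1 * P1 i, hR i _⟩
    have h4 := s2 fun i => (P0 i)ᵀ * (X i).1 * P1 i
    convert mul_mem (mul_mem h1 h2) h4 using 1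
    funext i
    simp only [Pi.mul_apply]
    rw [← U_add, ← U_add]
    congr 1
    apply Subtype.ext
    simp only [dg, blk]
    have hPi : P0 i * (P0 i)ᵀ + P1 i * (P1 i)ᵀ =
        diagonal fun a : Fin (d i) => if (a : ℕ) < 2 * e i then (1 : F i) else 0 := by
      simp only [P0, P1]
      rw [fr_mul_tr _ (pos_inj _ _), fr_mul_tr _ (pos_inj _ _), diagonal_add]
      congr 1
      funext a
      have m0 : a ∈ Set.range (pos 0 (h3 0 (by simp) i)) ↔ (a : ℕ) < e i := by
        constructor
        · rintro ⟨b, rfl⟩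
          simp [pos]
        · intro h
          exact ⟨⟨a, h⟩, by simp [pos]⟩
      have m1 : a ∈ Set.range (pos 1 (h3 1 (by simp) i)) ↔ e i ≤ (a : ℕ) ∧ (a : ℕ) < 2 * e i := by
        constructor
        · rintro ⟨b, rfl⟩
          have := b.2
          simp only [pos]
          omega
        · intro h
          exact ⟨⟨a - e i, by omega⟩, by apply Fin.ext; simp only [pos]; omega⟩
      simp only [m0, m1]
      by_cases c1 : (a : ℕ) < e i
      · have c2 : ¬ (e i ≤ (a : ℕ)) := by omega
        have c3 : (a : ℕ) < 2 * e i := by omega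
        simp [c1, c2, c3]
      · have c2 : (e i ≤ (a : ℕ)) := by omega
        simp [c1, c2]
    have := diag_supp (fun a : Fin (d i) => (a : ℕ) < 2 * e i) (X i).1 (by
      intro a b hab
      simpa using hX i a b hab)
    rw [← hPi] at this
    nth_rewrite 1 [← this]
    simp only [transpose_mul, transpose_transpose, (X i).2.eq, Matrix.mul_assoc,
      Matrix.mul_add, Matrix.add_mul]
    abel

end prod2
end CofSp

namespace CofSp
open Matrix

section emb
variable {α κ : Type*} {β : κ → Type*} {R : Type*} [Fintype α] [DecidableEq α] [Fintype κ]
  [DecidableEq κ] [∀ j, Fintype (β j)] [∀ j, DecidableEq (β j)] [CommRing R]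

/-- Doubled coordinate frame. -/
def Qh {α β : Type*} [DecidableEq α] [Fintype α] (R : Type*) [CommRing R] (f : β → α) :
    Matrix (α ⊕ α) (β ⊕ β) R :=
  fromBlocks (fr R f) 0 0 (fr R f)

lemma Qh_self {α β : Type*} [DecidableEq α] [Fintype α] [DecidableEq β] (f : β → α)
    (hf : Function.Injective f) : (Qh R f)ᵀ * Qh R f = 1 := by
  simp [Qh, fromBlocks_transpose, fromBlocks_multiply, fr_tr_mul_self f hf]

lemma Qh_ne {α β γ : Type*} [DecidableEq α] [Fintype α] (f : β → α) (g : γ → α)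
    (h : ∀ b c, f b ≠ g c) : (Qh R f)ᵀ * Qh R g = 0 := by
  simp [Qh, fromBlocks_transpose, fromBlocks_multiply, fr_tr_mul_ne f g h]

lemma J_Qh {α β : Type*} [DecidableEq α] [Fintype α] [DecidableEq β] [Fintype β] (f : β → α) :
    J α R * Qh R f = Qh R f * J β R := by
  simp [Qh, J, fromBlocks_multiply]

lemma Qh_tr_J {α β : Type*} [DecidableEq α] [Fintype α] [DecidableEq β] [Fintype β] (f : β → α) :
    (Qh R f)ᵀ * J α R = J β R * (Qh R f)ᵀ := by
  simp [Qh, J, fromBlocks_transpose, fromBlocks_multiply]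

/-- The block sum. -/
def bs (f : ∀ j, β j → α) (C : ∀ j, Matrix (β j ⊕ β j) (β j ⊕ β j) R) :
    Matrix (α ⊕ α) (α ⊕ α) R := ∑ j, Qh R (f j) * C j * (Qh R (f j))ᵀ

lemma bs_add (f : ∀ j, β j → α) (C D : ∀ j, Matrix (β j ⊕ β j) (β j ⊕ β j) R) :
    bs f (fun j => C j + D j) = bs f C + bs f D := by
  simp [bs, Matrix.mul_add, Matrix.add_mul, Finset.sum_add_distrib]

lemma bs_zero (f : ∀ j, β j → α) :
    bs f (fun j => (0 : Matrix (β j ⊕ β j) (β j ⊕ β j) R)) = 0 := by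
  simp [bs]

lemma bs_mul (f : ∀ j, β j → α) (hf : ∀ j, Function.Injective (f j))
    (hne : ∀ i j, i ≠ j → ∀ a b, f i a ≠ f j b)
    (C D : ∀ j, Matrix (β j ⊕ β j) (β j ⊕ β j) R) :
    bs f C * bs f D = bs f (fun j => C j * D j) := by
  simp only [bs]
  rw [Finset.sum_mul]
  refine Finset.sum_congr rfl fun j _ => ?_
  rw [Finset.mul_sum, Finset.sum_eq_single j]
  · have : ∀ P : Matrix (β j ⊕ β j) (α ⊕ α) R, (Qh R (f j))ᵀ * (Qh R (f j) * P) = P := by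
      intro P
      rw [← Matrix.mul_assoc, Qh_self _ (hf j), Matrix.one_mul]
    simp only [Matrix.mul_assoc, this]
  · intro k _ hk
    have : ∀ P : Matrix (β k ⊕ β k) (α ⊕ α) R, (Qh R (f j))ᵀ * (Qh R (f k) * P) = 0 := by
      intro P
      rw [← Matrix.mul_assoc, Qh_ne _ _ (hne j k hk.symm), Matrix.zero_mul]
    simp only [Matrix.mul_assoc, this, Matrix.mul_zero]
  · simp

lemma bs_tr (f : ∀ j, β j → α) (C : ∀ j, Matrix (β j ⊕ β j) (β j ⊕ β j) R) :
    (bs f C)ᵀ = bs f (fun j => (C j)ᵀ) := by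
  simp [bs, transpose_sum, transpose_mul, Matrix.mul_assoc]

lemma J_bs (f : ∀ j, β j → α) (C : ∀ j, Matrix (β j ⊕ β j) (β j ⊕ β j) R) :
    J α R * bs f C = bs f (fun j => J (β j) R * C j) := by
  simp only [bs]
  rw [Finset.mul_sum]
  refine Finset.sum_congr rfl fun j _ => ?_
  simp only [← Matrix.mul_assoc, J_Qh]

lemma bs_J (f : ∀ j, β j → α) (C : ∀ j, Matrix (β j ⊕ β j) (β j ⊕ β j) R) :
    bs f C * J α R = bs f (fun j => C j * J (β j) R) := by
  simp only [bs]
  rw [Finset.sum_mul]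
  refine Finset.sum_congr rfl fun j _ => ?_
  simp only [Matrix.mul_assoc, Qh_tr_J]

/-- The block embedding. -/
def emb (f : ∀ j, β j → α) (hf : ∀ j, Function.Injective (f j))
    (hne : ∀ i j, i ≠ j → ∀ a b, f i a ≠ f j b) :
    (∀ j, symplecticGroup (β j) R) →* symplecticGroup α R where
  toFun A := ⟨1 + bs f (fun j => (A j).1 - 1), by
    rw [SymplecticGroup.mem_iff, transpose_add, transpose_one, bs_tr, Matrix.add_mul,
      Matrix.one_mul, bs_J, Matrix.add_mul, Matrix.mul_add, Matrix.mul_add, J_bs,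
      bs_mul f hf hne, Matrix.mul_one, Matrix.mul_one, add_assoc, ← bs_add, ← bs_add]
    conv_rhs => rw [← add_zero (J α R), ← bs_zero f]
    congr 2
    funext j
    have := SymplecticGroup.mem_iff.1 (A j).2
    rw [transpose_sub, transpose_one, Matrix.sub_mul, Matrix.mul_sub, Matrix.mul_sub,
      Matrix.sub_mul, this]
    simp⟩
  map_one' := by
    apply Subtype.ext
    simp [bs_zero]
  map_mul' A B := by
    apply Subtype.ext
    simp only [Submonoid.coe_mul, Pi.mul_apply]
    rw [Matrix.add_mul, Matrix.mul_add, Matrix.mul_add, bs_mul f hf hne, Matrix.one_mul, Matrix.mul_one,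
      Matrix.one_mul, add_assoc, ← bs_add, ← bs_add]
    congr 2
    funext j
    rw [Matrix.sub_mul, Matrix.mul_sub, Matrix.mul_sub, Matrix.one_mul, Matrix.mul_one,
      Matrix.mul_one]
    abel

lemma emb_U (f : ∀ j, β j → α) (hf : ∀ j, Function.Injective (f j))
    (hne : ∀ i j, i ≠ j → ∀ a b, f i a ≠ f j b) (j : κ)
    (A : ∀ j, symplecticGroup (β j) R) (hA : ∀ i, i ≠ j → A i = 1) (Y : SM (β j) R)
    (hY : A j = U Y) :
    emb f hf hne A = U (dg (fr R (f j)) Y) := by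
  apply Subtype.ext
  simp only [emb, MonoidHom.coe_mk, OneHom.coe_mk, bs]
  rw [Finset.sum_eq_single j]
  · have : (fromBlocks 1 Y.1 0 1 : Matrix (β j ⊕ β j) (β j ⊕ β j) R) - 1
        = fromBlocks 0 Y.1 0 0 := by
      rw [sub_eq_iff_eq_add, ← fromBlocks_one, fromBlocks_add]; simp
    rw [hY]
    simp only [U, this, Qh, fromBlocks_transpose, fromBlocks_multiply, dg]
    rw [← fromBlocks_one, fromBlocks_add]
    simp
  · intro i _ hi
    simp [hA i hi]
  · simp

end emb
end CofSp

namespace CofSp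
open Matrix

/-- Block sizes. -/
def bm (d j : ℕ) : ℕ := d / 2 ^ j - d / 2 ^ (j + 1)

/-- Block positions. -/
def bf (d j : ℕ) : Fin (bm d j) → Fin d := fun k => ⟨k + d / 2 ^ (j + 1), by
  have h1 := k.2
  have h2 : d / 2 ^ j ≤ d := Nat.div_le_self _ _
  unfold bm at h1
  omega⟩

lemma bf_inj (d j : ℕ) : Function.Injective (bf d j) := by
  intro a b h
  simp only [bf, Fin.mk.injEq] at h
  exact Fin.ext (by omega)

lemma bf_ne_lt (d i j : ℕ) (h : i < j) (a : Fin (bm d i)) (b : Fin (bm d j)) :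
    bf d i a ≠ bf d j b := by
  intro h'
  simp only [bf, Fin.mk.injEq] at h'
  have h1 : d / 2 ^ j ≤ d / 2 ^ (i + 1) :=
    Nat.div_le_div_left (Nat.pow_le_pow_right (by simp) h) (by positivity)
  have h2 := b.2
  unfold bm at h2
  omega

lemma bf_ne (d i j : ℕ) (h : i ≠ j) (a : Fin (bm d i)) (b : Fin (bm d j)) :
    bf d i a ≠ bf d j b := by
  rcases lt_or_gt_of_ne h with h | h
  · exact bf_ne_lt d i j h a b
  · exact (bf_ne_lt d j i h b a).symm

lemma bm_eq (d j : ℕ) : bm d j = d / 2 ^ j - d / 2 ^ j / 2 := by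
  rw [bm, pow_succ, Nat.div_div_eq_div_mul]

lemma six_le {d j : ℕ} (h : 6 * 2 ^ j ≤ d) : 6 ≤ d / 2 ^ j := by
  rwa [Nat.le_div_iff_mul_le (by positivity)]

lemma three_le_bm {d j : ℕ} (h : 6 * 2 ^ j ≤ d) : 3 ≤ bm d j := by
  have := six_le h
  rw [bm_eq]
  omega

lemma le_bm {d j : ℕ} (h : 6 * 2 ^ j ≤ d) : d ≤ 20 * 2 ^ j * (bm d j / 2) := by
  have h1 := six_le h
  have h2 : d < 2 ^ j * (d / 2 ^ j + 1) := Nat.lt_mul_div_succ d (by positivity)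
  have h3 : d / 2 ^ j + 1 ≤ 20 * (bm d j / 2) := by
    rw [bm_eq]
    omega
  have h4 := Nat.mul_le_mul_left (2 ^ j) h3
  calc d ≤ _ := h2.le
    _ ≤ _ := h4
    _ = _ := by ring

lemma exists_bound_one (d q : ℕ → ℕ)
    (h2 : ¬ ∃ (I : Set ℕ) (d₀ : ℕ), I.Infinite ∧ (∀ n ∈ I, d n = d₀) ∧
        ∀ n ∈ I, ∀ m ∈ I, n < m → q n < q m) (d₀ : ℕ) :
    ∃ B, ∀ n, d n = d₀ → q n ≤ B := by
  by_contra hcon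
  push Not at hcon
  have step : ∀ N, ∃ n, d n = d₀ ∧ N < n ∧ ∀ m ≤ N, q m < q n := by
    intro N
    obtain ⟨n, hn, hq⟩ := hcon ((Finset.range (N + 1)).sup q)
    have hm : ∀ m ≤ N, q m < q n := fun m hm =>
      (Finset.le_sup (f := q) (Finset.mem_range.2 (by omega))).trans_lt hq
    refine ⟨n, hn, ?_, hm⟩
    by_contra hc
    exact lt_irrefl _ (hm n (by omega))
  choose g hg1 hg2 hg3 using step
  let φ : ℕ → ℕ := fun k => Nat.rec (g 0) (fun _ x => g x) k
  have hφ : ∀ k, φ (k + 1) = g (φ k) := fun k => rfl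
  have hmono : StrictMono φ := strictMono_nat_of_lt_succ fun k => by rw [hφ]; exact hg2 _
  refine h2 ⟨Set.range φ, d₀, Set.infinite_range_of_injective hmono.injective, ?_, ?_⟩
  · rintro _ ⟨k, rfl⟩
    cases k with
    | zero => exact hg1 0
    | succ k => rw [hφ]; exact hg1 _
  · rintro _ ⟨a, rfl⟩ _ ⟨b, rfl⟩ hab
    have hab := hmono.lt_iff_lt.1 hab
    cases b with
    | zero => omega
    | succ b =>
      rw [hφ]
      exact hg3 _ _ (hmono.monotone (by omega))

lemma exists_bound (d q : ℕ → ℕ)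
    (h2 : ¬ ∃ (I : Set ℕ) (d₀ : ℕ), I.Infinite ∧ (∀ n ∈ I, d n = d₀) ∧
        ∀ n ∈ I, ∀ m ∈ I, n < m → q n < q m) (D : ℕ) :
    ∃ B, ∀ n, d n < D → q n ≤ B := by
  choose B hB using exists_bound_one d q h2
  refine ⟨(Finset.range D).sup B, fun n hn => (hB _ n rfl).trans ?_⟩
  exact Finset.le_sup (f := B) (Finset.mem_range.2 hn)

lemma exists_surj (d D Q : ℕ) (F : Type*) [Field F] [Fintype F] (hd : d ≤ D)
    (hQ : Fintype.card F ≤ Q) :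
    ∃ e : Fin (Q ^ ((D + D) * (D + D))) → symplecticGroup (Fin d) F, Function.Surjective e := by
  classical
  have hF : 1 ≤ Fintype.card F := Fintype.card_pos
  have h1 : Fintype.card (symplecticGroup (Fin d) F) ≤ Q ^ ((D + D) * (D + D)) := by
    calc Fintype.card (symplecticGroup (Fin d) F)
        ≤ Fintype.card (Matrix (Fin d ⊕ Fin d) (Fin d ⊕ Fin d) F) :=
          Fintype.card_le_of_injective _ Subtype.val_injective
      _ = Fintype.card ((Fin d ⊕ Fin d) → (Fin d ⊕ Fin d) → F) := rfl
      _ = Fintype.card F ^ ((d + d) * (d + d)) := by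
          simp [Fintype.card_fun, pow_mul]
      _ ≤ Q ^ ((d + d) * (d + d)) := Nat.pow_le_pow_left hQ _
      _ ≤ _ := Nat.pow_le_pow_right (by omega) (by gcongr)
  obtain ⟨e⟩ := Function.Embedding.nonempty_of_card_le
    (α := symplecticGroup (Fin d) F) (β := Fin (Q ^ ((D + D) * (D + D)))) (by simpa using h1)
  exact ⟨Function.invFun e, Function.invFun_surjective e.injective⟩

theorem main_thm (d : ℕ → ℕ) (F : ℕ → Type*) [∀ n, Field (F n)] [∀ n, Fintype (F n)]
    (hd : ∀ n, 3 ≤ d n)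
    (h2 : ¬ ∃ (I : Set ℕ) (d₀ : ℕ), I.Infinite ∧ (∀ n ∈ I, d n = d₀) ∧
        ∀ n ∈ I, ∀ m ∈ I, n < m → Fintype.card (F n) < Fintype.card (F m)) :
    ¬ ∃ H : ℕ → Subgroup (∀ n, ↥(Matrix.symplecticGroup (Fin (d n)) (F n))),
        Monotone H ∧ (∀ t, H t ≠ ⊤) ∧
          ∀ g : ∀ n, ↥(Matrix.symplecticGroup (Fin (d n)) (F n)), ∃ t, g ∈ H t := by
  classical
  rintro ⟨H, hm, hne, hu⟩
  obtain ⟨z, hz⟩ := exists_normal_generator (F := F) hd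
  let κ : ℕ → Type := fun n => {j : Fin (d n) // 6 * 2 ^ j.1 ≤ d n}
  have hfi : ∀ n, ∀ j : κ n, Function.Injective (bf (d n) j.1) := fun n j => bf_inj _ _
  have hfn : ∀ n, ∀ i j : κ n, i ≠ j → ∀ a b, bf (d n) i.1 a ≠ bf (d n) j.1 b := by
    intro n i j hij
    refine bf_ne _ _ _ fun h => hij ?_
    exact Subtype.ext (Fin.ext h)
  let Φ : (∀ ω : (Σ n, κ n), symplecticGroup (Fin (bm (d ω.1) ω.2.1)) (F ω.1)) →*
      (∀ n, symplecticGroup (Fin (d n)) (F n)) :=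
    { toFun := fun g n => emb (fun j : κ n => bf (d n) j.1) (hfi n) (hfn n) fun j => g ⟨n, j⟩
      map_one' := by
        funext n
        exact map_one (emb (fun j : κ n => bf (d n) j.1) (hfi n) (hfn n))
      map_mul' := by
        intro a b
        funext n
        exact map_mul (emb (fun j : κ n => bf (d n) j.1) (hfi n) (hfn n)) _ _ }
  have hΦ : ∀ g n, Φ g n = emb (fun j : κ n => bf (d n) j.1) (hfi n) (hfn n) fun j => g ⟨n, j⟩ :=
    fun g n => rfl
  obtain ⟨z', hz'⟩ := exists_normal_generator (ι := Σ n, κ n)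
    (d := fun ω => bm (d ω.1) ω.2.1) (F := fun ω => F ω.1) (fun ω => three_le_bm ω.2.2)
  obtain ⟨j, t, ht⟩ := fact1 (H := fun t => (H t).comap Φ)
    (fun s t hst => Subgroup.comap_mono (hm hst)) (fun g => hu (Φ g)) z' hz'
    (fun j => {ω | ω.2.1.1 = j}) (by
      intro i j hij
      refine Set.disjoint_left.2 fun ω h h' => hij ?_
      exact h.symm.trans h')
  obtain ⟨Q, hQ⟩ := exists_bound d (fun n => Fintype.card (F n)) h2 (6 * 2 ^ j)
  obtain ⟨t1, ht1⟩ := good_of_bounded hm hu z hz {n | d n < 6 * 2 ^ j} _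
    (fun n hn => exists_surj (d n) (6 * 2 ^ j) Q (F n) (le_of_lt hn) (hQ n hn))
  obtain ⟨S, hSf, hS⟩ := eq_top_of_supported (F := F)
    (fun n => if 6 * 2 ^ j ≤ d n then Finset.univ.image (bf (d n) j) else Finset.univ)
    (20 * 2 ^ j) (by
      intro n
      split_ifs with h
      · rw [Finset.card_image_of_injective _ (bf_inj _ _)]
        simpa using le_bm h
      · have h3 : 1 ≤ d n / 2 := by have := hd n; omega
        simp only [Finset.card_univ, Fintype.card_fin]
        calc d n ≤ 20 * 2 ^ j * 1 := by omega
          _ ≤ _ := Nat.mul_le_mul_left _ h3)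
  have hSt : ∃ t2, ∀ s ∈ S, s ∈ H t2 := by
    choose τ hτ using hu
    obtain ⟨t2, h⟩ := (hSf.image τ).bddAbove
    exact ⟨t2, fun s hs => hm (h (Set.mem_image_of_mem _ hs)) (hτ s)⟩
  obtain ⟨t2, ht2⟩ := hSt
  apply hne (max t (max t1 t2))
  apply hS
  · intro s hs
    exact Subgroup.le_normalizer (hm (by simp) (ht2 s hs))
  · intro X hX
    have hR : ∀ (ω : Σ n, κ n), ((fr (F ω.1) (bf (d ω.1) ω.2.1))ᵀ * (X ω.1).1 *
        (fr (F ω.1) (bf (d ω.1) ω.2.1))).IsSymm := by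
      intro ω
      rw [IsSymm]
      simp only [transpose_mul, transpose_transpose, (X ω.1).2.eq, Matrix.mul_assoc]
    have e1 := hm (show t ≤ max t (max t1 t2) by simp) (ht fun ω => U ⟨_, hR ω⟩)
    have e2 := hm (show t1 ≤ max t (max t1 t2) by simp) (ht1 fun n => U (X n))
    convert mul_mem e1 e2 using 1
    funext n
    rw [Pi.mul_apply, hΦ]
    by_cases hn : d n < 6 * 2 ^ j
    · rw [rho_mem (by exact hn)]
      have : (fun i : κ n => rho {ω : (Σ n, κ n) | ω.2.1.1 = j}
          (fun ω => U ⟨_, hR ω⟩) ⟨n, i⟩) = 1 := by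
        funext i
        refine rho_not_mem ?_ _
        intro (h : i.1.1 = j)
        have := i.2
        rw [h] at this
        omega
      rw [this, map_one, one_mul]
    · rw [rho_not_mem (by exact hn), mul_one]
      have hn' : 6 * 2 ^ j ≤ d n := by omega
      have hj : j < d n := by
        have := @Nat.lt_two_pow_self j
        omega
      rw [emb_U (fun j : κ n => bf (d n) j.1) (hfi n) (hfn n) ⟨⟨j, hj⟩, hn'⟩ _ _
        ⟨_, hR ⟨n, ⟨⟨j, hj⟩, hn'⟩⟩⟩ (rho_mem (by rfl) _)]
      · congr 1
        apply Subtype.ext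
        simp only [dg]
        have := diag_supp (fun a => a ∈ Set.range (bf (d n) j)) (X n).1 (by
          intro a b hab
          simpa [hn'] using hX n a b hab)
        rw [← fr_mul_tr _ (bf_inj _ _)] at this
        conv_lhs => rw [← this]
        simp only [Matrix.mul_assoc]
      · intro i hi
        refine rho_not_mem ?_ _
        intro (h : i.1.1 = j)
        exact hi (Subtype.ext (Fin.ext h))

end CofSp

/-- Let `dₙ ≥ 3` and let `Fₙ` be finite fields (of cardinality `qₙ`) such that there is
no infinite `I ⊆ ℕ` on which the `dₙ` are constant and the `qₙ` strictly increasing.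
Then `∏ n, Sp(2dₙ, Fₙ)` cannot be written as the union of a countable increasing chain
of proper subgroups. -/
theorem stmt_18 (d : ℕ → ℕ) (F : ℕ → Type*) [∀ n, Field (F n)] [∀ n, Fintype (F n)]
    (hd : ∀ n, 3 ≤ d n)
    (h2 : ¬ ∃ (I : Set ℕ) (d₀ : ℕ), I.Infinite ∧ (∀ n ∈ I, d n = d₀) ∧
        ∀ n ∈ I, ∀ m ∈ I, n < m → Fintype.card (F n) < Fintype.card (F m)) :
    ¬ ∃ H : ℕ → Subgroup (∀ n, ↥(Matrix.symplecticGroup (Fin (d n)) (F n))),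
        Monotone H ∧ (∀ t, H t ≠ ⊤) ∧
          ∀ g : ∀ n, ↥(Matrix.symplecticGroup (Fin (d n)) (F n)), ∃ t, g ∈ H t := by
  exact CofSp.main_thm d F hd h2
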